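/- Let A be a commutative ring and B an A-algebra which is finite and free as an A-module. Let C := B ⊗_A B, m : C → B the multiplication map, J := ker m, and let h : C → Hom_A(B*, B) be the map h(b₁ ⊗ b₂)(f) = f(b₁)·b₂, where B* := Hom_A(B,A). Then for every x ∈ Ann_C(J), the composite τ_{B/A} ∘ h(x) : B* → B* equals multiplication by m(x) in the B-module structure of B*; that is, τ_{B/A}(h(x)(f)) = m(x)·f for all f ∈ B*. -/

import Mathlib

open scoped TensorProduct

/-- The `A`-linear map `h : B ⊗[A] B → Hom_A(B*, B)`, `h (b₁ ⊗ b₂) f = f b₁ • b₂`. -/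
noncomputable def tensorToHomDual (A B : Type*) [CommRing A] [CommRing B] [Algebra A B] :
    B ⊗[A] B →ₗ[A] ((B →ₗ[A] A) →ₗ[A] B) :=
  (dualTensorHom A (Module.Dual A B) B).comp
    (TensorProduct.map (Module.Dual.eval A B) LinearMap.id)

/-!
View `C = B ⊗[A] B` as a finite free algebra over its left factor, with augmentation `m : C → B`.
An element `w` of `C` that kills `ker m` satisfies `w * c = m c • w`, and the `B`-linear map
`c ↦ m c • w` has trace `m w`. On the other hand `Tr_{C/B} (b ⊗ c) = Tr_{B/A} c • b`, so
applying `f : B → A` to `Tr_{C/B} w` gives `Tr_{B/A} (h w f)`. The factor `y` is absorbed by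
replacing `x` with `x * (1 ⊗ y)`, which still kills `ker m`.
-/

section Trace

variable {R S : Type*} [CommRing R] [CommRing S] [Algebra R S] [Module.Finite R S] [Module.Free R S]

theorem trace_eq_apply_of_mul_ker_eq_zero (ε : S →ₐ[R] R) {w : S}
    (hw : ∀ j ∈ RingHom.ker ε, w * j = 0) : Algebra.trace R S w = ε w := by
  have lmul_eq : Algebra.lmul R S w = ε.toLinearMap.smulRight w := by
    ext s
    have hs : s - algebraMap R S (ε s) ∈ RingHom.ker ε := by simp [RingHom.mem_ker]
    calc w * s = w * algebraMap R S (ε s) := sub_eq_zero.mp (by rw [← mul_sub, hw _ hs])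
      _ = ε s • w := by rw [← Algebra.commutes, ← Algebra.smul_def]
  rw [Algebra.trace_apply, lmul_eq, LinearMap.trace_smulRight, AlgHom.toLinearMap_apply]

theorem trace_tmul {R' : Type*} [CommRing R'] [Algebra R R'] (a : R') (s : S) :
    Algebra.trace R' (R' ⊗[R] S) (a ⊗ₜ s) = Algebra.trace R S s • a := by
  have trace_one_tmul : Algebra.trace R' (R' ⊗[R] S) (1 ⊗ₜ s) =
      algebraMap R R' (Algebra.trace R S s) := by
    rw [Algebra.trace_apply, ← Algebra.baseChange_lmul, LinearMap.trace_baseChange,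
      Algebra.trace_apply]
  calc Algebra.trace R' (R' ⊗[R] S) (a ⊗ₜ s)
      = a • Algebra.trace R' (R' ⊗[R] S) (1 ⊗ₜ s) := by
        rw [← map_smul, TensorProduct.smul_tmul', smul_eq_mul, mul_one]
    _ = Algebra.trace R S s • a := by
        rw [trace_one_tmul, smul_eq_mul, mul_comm, ← Algebra.smul_def]

end Trace

section TensorToHomDual

variable {A B : Type*} [CommRing A] [CommRing B] [Algebra A B]

theorem tensorToHomDual_tmul_apply (b c : B) (f : B →ₗ[A] A) :
    tensorToHomDual A B (b ⊗ₜ c) f = f b • c := rfl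

theorem tensorToHomDual_mul_one_tmul_apply (x : B ⊗[A] B) (y : B) (f : B →ₗ[A] A) :
    tensorToHomDual A B (x * (1 ⊗ₜ y)) f = tensorToHomDual A B x f * y := by
  induction x with
  | zero => simp
  | add x₁ x₂ ih₁ ih₂ => simp only [map_add, add_mul, LinearMap.add_apply, ih₁, ih₂]
  | tmul b c =>
    rw [Algebra.TensorProduct.tmul_mul_tmul, mul_one, tensorToHomDual_tmul_apply,
      tensorToHomDual_tmul_apply, smul_mul_assoc]

theorem trace_tensorToHomDual_apply [Module.Finite A B] [Module.Free A B]
    (x : B ⊗[A] B) (f : B →ₗ[A] A) :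
    Algebra.trace A B (tensorToHomDual A B x f) = f (Algebra.trace B (B ⊗[A] B) x) := by
  induction x with
  | zero => simp
  | add x₁ x₂ ih₁ ih₂ => simp only [map_add, LinearMap.add_apply, ih₁, ih₂]
  | tmul b c =>
    rw [tensorToHomDual_tmul_apply, trace_tmul, map_smul, map_smul, smul_eq_mul, smul_eq_mul,
      mul_comm]

end TensorToHomDual

/-- Let `A` be a commutative ring and `B` an `A`-algebra which is finite and
free as an `A`-module.  Let `C := B ⊗[A] B`, `m : C → B` the multiplication map, `J := ker m`,
and `h : C → Hom_A(B*, B)` given by `h (b₁ ⊗ b₂) f = f b₁ • b₂` where `B* = Hom_A(B, A)`.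
Then for every `x ∈ Ann_C J`, the composite `τ_{B/A} ∘ h x : B* → B*` is multiplication by
`m x` for the `B`-module structure `(b · f) y = f (b * y)` on `B*`: for all `f : B*` and
`y : B` one has `Tr_{B/A}((h x f) * y) = f (m x * y)`. -/
theorem trace_comp_tensorToHomDual_eq_smul
    {A B : Type*} [CommRing A] [CommRing B] [Algebra A B]
    [Module.Finite A B] [Module.Free A B]
    (x : B ⊗[A] B)
    (hx : ∀ j ∈ RingHom.ker (Algebra.TensorProduct.lmul' A : B ⊗[A] B →ₐ[A] B), x * j = 0) :
    ∀ (f : B →ₗ[A] A) (y : B),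
      Algebra.trace A B (tensorToHomDual A B x f * y) =
        f (Algebra.TensorProduct.lmul' A (S := B) x * y) := by
  intro f y
  have mul_ker_eq_zero : ∀ j ∈ RingHom.ker (Algebra.TensorProduct.lmul'' A (S := B)),
      x * (1 ⊗ₜ y) * j = 0 := fun j hj ↦ by
    rw [mul_right_comm, hx j hj, zero_mul]
  calc Algebra.trace A B (tensorToHomDual A B x f * y)
      = f (Algebra.trace B (B ⊗[A] B) (x * (1 ⊗ₜ y))) := by
        rw [← tensorToHomDual_mul_one_tmul_apply, trace_tensorToHomDual_apply]
    _ = f (Algebra.TensorProduct.lmul' A (S := B) (x * (1 ⊗ₜ y))) :=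
        congrArg f (trace_eq_apply_of_mul_ker_eq_zero (Algebra.TensorProduct.lmul'' A)
          mul_ker_eq_zero)
    _ = f (Algebra.TensorProduct.lmul' A (S := B) x * y) := by
        rw [map_mul, Algebra.TensorProduct.lmul'_apply_tmul, one_mul]
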